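/- The integral solutions (X, Y) of the Mordell equation Y^2 = X^3 + 1323 are exactly (X, Y) = (−3, 36) and (X, Y) = (−3, −36), and the Mordell equation Y^2 = X^3 − 1323 has no integral solutions. -/

import Mathlib

/-!
Write `1323 = 3 * 21 ^ 2`. The equation `Y ^ 2 = X ^ 3 + 1323` factors in `ℤ[√3]` and
`Y ^ 2 = X ^ 3 - 1323` in the Eisenstein integers `ℤ[ω]`. Both rings are Euclidean, so if the two
conjugate factors are coprime, each of them is a unit times a cube, and comparing coefficients
yields a binary cubic form representing a fixed integer. When `3` or `7` divides `X`, one first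
divides it out; the factorization is then one of `3 * y ^ 2 = x ^ 3 ± 49` or
`y ^ 2 = 7 * x ^ 3 - 27`.

All the resulting cubic equations are excluded by congruences or size except one, coming from
`7 ^ 2 - 3 * y ^ 2 = (-x) ^ 3` and the fundamental unit of `ℤ[√3]`:
`2 * a ^ 3 + 9 * a ^ 2 * b + 18 * a * b ^ 2 + 9 * b ^ 3 = 7`. Modulo `7` it reduces to
`j ^ 3 + 9 * j * m ^ 2 - 72 * m ^ 3 = 1`, which says that `(j + 4 * m) + m * w - 2 * m * w ^ 2`
has norm `1` in the order `ℤ[w]` with `w ^ 3 = 3 * w + 4`. The elements of norm `1` in this order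
are the powers of `η = 9 + 11 * w + 5 * w ^ 2`, and Skolem's method at the prime `2`, where
`η ^ 4 ≡ 1` modulo `8`, shows that `1` is the only power of `η` of this shape.
-/

open scoped QuadraticAlgebra

section EuclideanNorm

variable {R : Type*} [CommRing R]

/-- A commutative ring is Euclidean for the absolute value of a multiplicative norm `N : R →* ℤ`
as soon as division with remainder of strictly smaller norm is possible. -/
@[reducible]
noncomputable def euclideanDomainOfNorm [Nontrivial R] (N : R →* ℤ) (hN : ∀ x, N x = 0 ↔ x = 0)
    (hdiv : ∀ x y, y ≠ 0 → ∃ q, |N (x - y * q)| < |N y|) : EuclideanDomain R where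
  __ := ‹CommRing R›
  __ := ‹Nontrivial R›
  quotient x y := open Classical in if hy : y = 0 then 0 else (hdiv x y hy).choose
  remainder x y := x - y * open Classical in if hy : y = 0 then 0 else (hdiv x y hy).choose
  quotient_zero x := dif_pos rfl
  quotient_mul_add_remainder_eq x y := by ring
  r x y := |N x| < |N y|
  r_wellFounded := by
    simp only [Int.abs_eq_natAbs, Nat.cast_lt]
    exact (measure fun x ↦ (N x).natAbs).wf
  remainder_lt x y hy := by
    rw [dif_neg hy]
    exact (hdiv x y hy).choose_spec
  mul_left_not_lt x y hy := by
    rw [map_mul, abs_mul, not_lt]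
    exact le_mul_of_one_le_right (abs_nonneg _) (Int.one_le_abs (mt (hN y).1 hy))

/-- Multiplying by a conjugate `y'` of `y` reduces division by `y` to division by `N y`. -/
theorem exists_abs_norm_sub_mul_lt (N : R →* ℤ) {x y y' q r : R} (hyy' : y * y' = N y)
    (hy' : N y' = N y) (hqr : x * y' = N y * q + r) (hr : |N r| < N y ^ 2) :
    ∃ q, |N (x - y * q)| < |N y| := by
  have hfactor : r = (x - y * q) * y' := by rw [← hyy'] at hqr; linear_combination -hqr
  rw [hfactor, map_mul, hy', abs_mul, ← sq_abs (N y), sq] at hr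
  exact ⟨q, lt_of_mul_lt_mul_right hr (abs_nonneg _)⟩

theorem exists_eq_mul_add_and_four_mul_sq_le (m : ℤ) {n : ℤ} (hn : n ≠ 0) :
    ∃ q r : ℤ, m = n * q + r ∧ 4 * r ^ 2 ≤ n ^ 2 := by
  refine ⟨round (m / n : ℚ), m - n * round (m / n : ℚ), by ring, ?_⟩
  have hn' : (n : ℚ) ≠ 0 := mod_cast hn
  have hround := abs_sub_round (m / n : ℚ)
  have hsq := sq_le_sq' (neg_le_of_abs_le hround) (le_of_abs_le hround)
  have hscale : (m - n * round (m / n : ℚ) : ℚ) = n * (m / n - round (m / n : ℚ)) := by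
    field_simp
  qify
  rw [hscale, mul_pow]
  nlinarith [sq_nonneg (n : ℚ)]

theorem exists_eq_unit_mul_pow_of_mul_eq_pow [IsDomain R] [IsPrincipalIdealRing R] {x z z' : R}
    {n : ℕ} (hmul : z * z' = x ^ n) (hcop : IsCoprime x (z + z')) :
    ∃ (u : Rˣ) (c : R), z = u * c ^ n := by
  have hprod : IsCoprime (z * z') (z + z') := hmul ▸ hcop.pow_left
  have hzz' : IsCoprime z z' := by
    have hz : IsCoprime z (z' + z * 1) := by
      simpa only [mul_one, add_comm] using hprod.of_mul_left_left
    exact IsCoprime.add_mul_left_right_iff.1 hz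
  obtain ⟨c, u, hu⟩ := exists_associated_pow_of_mul_eq_pow' hzz' hmul
  exact ⟨u, c, by rw [← hu, mul_comm]⟩

end EuclideanNorm

section SqrtThree

theorem sqrtThree_norm_eq_zero (x : ℤ√3) : x.norm = 0 ↔ x = 0 :=
  Zsqrtd.norm_eq_zero (fun n h ↦ Int.prime_three.irreducible.not_isSquare ⟨n, h⟩) x

theorem exists_abs_norm_sub_mul_lt_sqrtThree (x : ℤ√3) {y : ℤ√3} (hy : y ≠ 0) :
    ∃ q, |(x - y * q).norm| < |y.norm| := by
  have hn : y.norm ≠ 0 := mt (sqrtThree_norm_eq_zero y).1 hy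
  obtain ⟨s, a, hs, ha⟩ := exists_eq_mul_add_and_four_mul_sq_le (x * star y).re hn
  obtain ⟨t, b, ht, hb⟩ := exists_eq_mul_add_and_four_mul_sq_le (x * star y).im hn
  have hqr : x * star y = (y.norm : ℤ√3) * ⟨s, t⟩ + ⟨a, b⟩ := by
    rw [Zsqrtd.smul_val]
    exact Zsqrtd.ext hs ht
  have hpos := sq_pos_of_ne_zero hn
  refine exists_abs_norm_sub_mul_lt Zsqrtd.normMonoidHom y.norm_eq_mul_conj.symm y.norm_conj hqr ?_
  change |a * a - 3 * b * b| < y.norm ^ 2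
  rw [abs_lt]
  constructor <;> nlinarith

noncomputable instance : EuclideanDomain (ℤ√3) :=
  euclideanDomainOfNorm Zsqrtd.normMonoidHom sqrtThree_norm_eq_zero
    fun x _ hy ↦ exists_abs_norm_sub_mul_lt_sqrtThree x hy

theorem norm_eq_one_of_isUnit_sqrtThree {u : ℤ√3} (hu : IsUnit u) : u.norm = 1 := by
  refine (Int.isUnit_iff.1 (hu.map Zsqrtd.normMonoidHom)).resolve_right fun h ↦ ?_
  have hsq : (u.re : ZMod 3) ^ 2 = -1 := by
    have h3 : (3 : ZMod 3) = 0 := rfl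
    have := congrArg (Int.cast : ℤ → ZMod 3) ((Zsqrtd.norm_def u).symm.trans h)
    push_cast [h3] at this
    rw [sq]
    simpa using this
  exact (by decide : ∀ a : ZMod 3, a ^ 2 ≠ -1) _ hsq

/-- The fundamental solution `2 + √3` of the Pell equation `x ^ 2 - 3 * y ^ 2 = 1`. -/
def pellThree : Pell.Solution₁ 3 := .mk 2 1 (by norm_num)

theorem isFundamental_pellThree : Pell.IsFundamental pellThree :=
  ⟨by simp [pellThree], by simp [pellThree], fun h ↦ by simp [pellThree]; omega⟩

theorem exists_zpow_eq_mul_pow_three {G : Type*} [Group G] (g : G) (n : ℤ) :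
    ∃ k : ℤ, g ^ n = (g ^ k) ^ 3 ∨ g ^ n = g * (g ^ k) ^ 3 ∨ g ^ n = g⁻¹ * (g ^ k) ^ 3 := by
  have hpow (k : ℤ) : (g ^ k) ^ 3 = g ^ (k * 3) := by
    rw [zpow_mul]; norm_cast
  simp only [hpow, ← zpow_one_add, ← zpow_neg_one g, ← zpow_add]
  obtain h | h | h : n % 3 = 0 ∨ n % 3 = 1 ∨ n % 3 = 2 := by omega
  · exact ⟨n / 3, .inl (by congr 1; omega)⟩
  · exact ⟨n / 3, .inr (.inl (by congr 1; omega))⟩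
  · exact ⟨n / 3 + 1, .inr (.inr (by congr 1; omega))⟩

theorem exists_eq_mul_pow_three_of_isUnit_sqrtThree {u : ℤ√3} (hu : IsUnit u) :
    ∃ v, u = v ^ 3 ∨ u = ⟨2, 1⟩ * v ^ 3 ∨ u = ⟨2, -1⟩ * v ^ 3 := by
  let U : Pell.Solution₁ 3 :=
    ⟨u, Zsqrtd.norm_eq_one_iff_mem_unitary.1 (norm_eq_one_of_isUnit_sqrtThree hu)⟩
  suffices ∃ V, U = V ^ 3 ∨ U = pellThree * V ^ 3 ∨ U = pellThree⁻¹ * V ^ 3 by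
    obtain ⟨V, hV⟩ := this
    exact ⟨V, hV.imp (congrArg Subtype.val) (Or.imp (congrArg Subtype.val) (congrArg Subtype.val))⟩
  obtain ⟨n, hn⟩ := isFundamental_pellThree.eq_zpow_or_neg_zpow U
  obtain ⟨k, hk⟩ := exists_zpow_eq_mul_pow_three pellThree n
  obtain hn | hn := hn
  · exact ⟨pellThree ^ k, by rwa [hn]⟩
  · refine ⟨-pellThree ^ k, ?_⟩
    simpa only [hn, Odd.neg_pow (by decide : Odd 3), mul_neg, neg_inj] using hk

theorem sqrtThree_pow_three (a b : ℤ) :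
    (⟨a, b⟩ : ℤ√3) ^ 3 = ⟨a ^ 3 + 9 * a * b ^ 2, 3 * a ^ 2 * b + 3 * b ^ 3⟩ := by
  ext <;> simp [pow_succ] <;> ring

/-- The second alternative comes from the classes of the fundamental unit `2 + √3` and of its
conjugate modulo cubes. -/
theorem exists_of_sq_sub_three_mul_sq_eq_pow_three {p q x : ℤ} (h : p ^ 2 - 3 * q ^ 2 = x ^ 3)
    (hcop : IsCoprime x (2 * p)) :
    ∃ a b A B : ℤ, A = a ^ 3 + 9 * a * b ^ 2 ∧ B = 3 * a ^ 2 * b + 3 * b ^ 3 ∧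
      (p = A ∧ q = B ∨ p = 2 * A + 3 * B ∧ (q = A + 2 * B ∨ q = -(A + 2 * B))) := by
  have hmul : (⟨p, q⟩ : ℤ√3) * ⟨p, -q⟩ = (x : ℤ√3) ^ 3 := by
    rw [← Int.cast_pow, ← h]
    ext <;> simp [sq] <;> ring
  have hadd : (⟨p, q⟩ : ℤ√3) + ⟨p, -q⟩ = (2 * p : ℤ) := by
    ext <;> simp [two_mul]
  obtain ⟨u, c, hu⟩ := exists_eq_unit_mul_pow_of_mul_eq_pow hmul
    (hadd ▸ hcop.map (Int.castRingHom (ℤ√3)))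
  obtain ⟨v, hv⟩ := exists_eq_mul_pow_three_of_isUnit_sqrtThree u.isUnit
  obtain ⟨a, b, hab⟩ : ∃ a b, v * c = ⟨a, b⟩ := ⟨_, _, rfl⟩
  have hcube : v ^ 3 * c ^ 3 = ⟨a ^ 3 + 9 * a * b ^ 2, 3 * a ^ 2 * b + 3 * b ^ 3⟩ := by
    rw [← mul_pow, hab, sqrtThree_pow_three]
  obtain hv | hv | hv := hv
  · rw [hv, hcube, Zsqrtd.ext_iff] at hu
    exact ⟨a, b, _, _, rfl, rfl, .inl hu⟩
  · rw [hv, mul_assoc, hcube, Zsqrtd.ext_iff] at hu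
    simp only [Zsqrtd.re_mul, Zsqrtd.im_mul] at hu
    exact ⟨a, b, _, _, rfl, rfl, .inr ⟨by linarith, .inl (by linarith)⟩⟩
  · rw [hv, mul_assoc, hcube, Zsqrtd.ext_iff] at hu
    simp only [Zsqrtd.re_mul, Zsqrtd.im_mul] at hu
    exact ⟨a, -b, _, _, rfl, rfl, .inr ⟨by linarith, .inr (by linarith)⟩⟩

end SqrtThree

section Eisenstein

/-- The ring `ℤ[ω]` of Eisenstein integers, where `ω ^ 2 = -1 - ω`. -/
abbrev EisensteinInt := QuadraticAlgebra ℤ (-1) (-1)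

namespace EisensteinInt

theorem four_mul_norm (x : EisensteinInt) :
    4 * x.norm = (2 * x.re - x.im) ^ 2 + 3 * x.im ^ 2 := by
  rw [QuadraticAlgebra.norm_def]; ring

theorem norm_nonneg (x : EisensteinInt) : 0 ≤ x.norm := by
  linarith [four_mul_norm x, sq_nonneg (2 * x.re - x.im), sq_nonneg x.im]

theorem norm_eq_zero (x : EisensteinInt) : x.norm = 0 ↔ x = 0 := by
  refine ⟨fun h ↦ ?_, fun h ↦ by rw [h, QuadraticAlgebra.norm_zero]⟩
  have hx := four_mul_norm x
  have him : x.im = 0 := by nlinarith [sq_nonneg (2 * x.re - x.im), sq_nonneg x.im]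
  have hre : x.re = 0 := by
    rw [h, him] at hx
    nlinarith
  exact QuadraticAlgebra.ext hre him

theorem exists_abs_norm_sub_mul_lt (x : EisensteinInt) {y : EisensteinInt} (hy : y ≠ 0) :
    ∃ q, |(x - y * q).norm| < |y.norm| := by
  have hn : y.norm ≠ 0 := mt (norm_eq_zero y).1 hy
  obtain ⟨s, a, hs, ha⟩ := exists_eq_mul_add_and_four_mul_sq_le (x * star y).re hn
  obtain ⟨t, b, ht, hb⟩ := exists_eq_mul_add_and_four_mul_sq_le (x * star y).im hn
  have hqr : x * star y = (y.norm : EisensteinInt) * ⟨s, t⟩ + ⟨a, b⟩ := by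
    ext
    · simpa using hs
    · simpa using ht
  have hpos := sq_pos_of_ne_zero hn
  have hstar : y * star y = (y.norm : EisensteinInt) := by
    rw [← y.algebraMap_norm_eq_mul_star, eq_intCast]
  refine _root_.exists_abs_norm_sub_mul_lt _ hstar y.norm_star hqr ?_
  rw [abs_of_nonneg (norm_nonneg _)]
  nlinarith [four_mul_norm ⟨a, b⟩, sq_nonneg (a + b)]

noncomputable instance : EuclideanDomain EisensteinInt :=
  euclideanDomainOfNorm QuadraticAlgebra.norm norm_eq_zero
    fun x _ hy ↦ exists_abs_norm_sub_mul_lt x hy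

theorem omega_pow_three : (ω : EisensteinInt) ^ 3 = 1 := by
  decide

theorem exists_eq_mul_pow_three_of_isUnit {u : EisensteinInt} (hu : IsUnit u) :
    ∃ v, u = v ^ 3 ∨ u = ω * v ^ 3 ∨ u = ω ^ 2 * v ^ 3 := by
  have hnorm : u.norm = 1 :=
    (Int.isUnit_iff.1 (hu.map QuadraticAlgebra.norm)).resolve_right
      fun h ↦ absurd (norm_nonneg u) (by omega)
  have hu4 := four_mul_norm u
  have hre : u.re ∈ Finset.Icc (-1 : ℤ) 1 := by
    rw [Finset.mem_Icc, ← abs_le, ← sq_le_one_iff_abs_le_one]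
    linarith [sq_nonneg (u.re - 2 * u.im)]
  have him : u.im ∈ Finset.Icc (-1 : ℤ) 1 := by
    rw [Finset.mem_Icc, ← abs_le, ← sq_le_one_iff_abs_le_one]
    linarith [sq_nonneg (2 * u.re - u.im)]
  have hfinite : ∀ a ∈ Finset.Icc (-1 : ℤ) 1, ∀ b ∈ Finset.Icc (-1 : ℤ) 1,
      ∀ u : EisensteinInt, u = ⟨a, b⟩ → u.norm = 1 →
        ∃ v ∈ ({1, -1} : Finset EisensteinInt), u = v ^ 3 ∨ u = ω * v ^ 3 ∨ u = ω ^ 2 * v ^ 3 := by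
    simp only [forall_eq]
    decide
  obtain ⟨v, -, hv⟩ := hfinite _ hre _ him u rfl hnorm
  exact ⟨v, hv⟩

theorem exists_pow_three_eq_and_even_im (d : EisensteinInt) :
    ∃ c, c ^ 3 = d ^ 3 ∧ Even c.im := by
  by_cases him : Even d.im
  · exact ⟨d, rfl, him⟩
  by_cases hre : Even d.re
  · refine ⟨ω ^ 2 * d, by rw [mul_pow, pow_right_comm, omega_pow_three, one_pow, one_mul], ?_⟩
    simpa [sq] using hre
  · refine ⟨ω * d, by rw [mul_pow, omega_pow_three, one_mul], ?_⟩
    simpa [← sub_eq_add_neg, Int.even_sub, hre] using him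

theorem exists_pow_three_eq_mk (d : EisensteinInt) :
    ∃ a b A B : ℤ, A = a ^ 3 - 9 * a * b ^ 2 ∧ B = 3 * a ^ 2 * b - 3 * b ^ 3 ∧
      d ^ 3 = ⟨A + B, 2 * B⟩ := by
  obtain ⟨c, hc, b, hb⟩ := exists_pow_three_eq_and_even_im d
  obtain ⟨a, ha⟩ : ∃ a, c = ⟨a + b, 2 * b⟩ :=
    ⟨c.re - b, QuadraticAlgebra.ext (by ring) (hb.trans (two_mul b).symm)⟩
  refine ⟨a, b, _, _, rfl, rfl, ?_⟩
  rw [← hc, ha]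
  ext <;> simp [pow_succ] <;> ring

end EisensteinInt

/-- In `ℤ[ω]`, where `√-3 = 1 + 2 * ω`, the equation reads
`(u + v * √-3) * (u - v * √-3) = x ^ 3`. -/
theorem exists_of_sq_add_three_mul_sq_eq_pow_three {u v x : ℤ} (h : u ^ 2 + 3 * v ^ 2 = x ^ 3)
    (hcop : IsCoprime x (2 * u)) :
    ∃ a b, u = a ^ 3 - 9 * a * b ^ 2 ∧ v = 3 * a ^ 2 * b - 3 * b ^ 3 := by
  have hmul : (⟨u + v, 2 * v⟩ : EisensteinInt) * ⟨u - v, -2 * v⟩ = (x : EisensteinInt) ^ 3 := by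
    rw [← Int.cast_pow, ← h]
    ext <;> simp [sq] <;> ring
  have hadd : (⟨u + v, 2 * v⟩ : EisensteinInt) + ⟨u - v, -2 * v⟩ = (2 * u : ℤ) := by
    ext <;> simp; ring
  obtain ⟨w, d, hw⟩ := exists_eq_unit_mul_pow_of_mul_eq_pow hmul
    (hadd ▸ hcop.map (Int.castRingHom EisensteinInt))
  obtain ⟨t, ht⟩ := EisensteinInt.exists_eq_mul_pow_three_of_isUnit w.isUnit
  obtain ⟨a, b, A, B, hA, hB, hAB⟩ := EisensteinInt.exists_pow_three_eq_mk (t * d)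
  rw [mul_pow] at hAB
  obtain ⟨m, hm⟩ : Odd (u + v) := by
    have hx : Odd x := by
      rw [← Int.not_even_iff_odd, even_iff_two_dvd, ← Int.prime_two.coprime_iff_not_dvd]
      exact hcop.of_mul_right_left.symm
    simpa [← h, Int.odd_add, parity_simps, show ¬ Even (3 : ℤ) by decide] using hx.pow (n := 3)
  suffices u = A ∧ v = B from ⟨a, b, hA ▸ this.1, hB ▸ this.2⟩
  obtain ht | ht | ht := ht <;>
    simp only [ht, mul_assoc, hAB, sq, QuadraticAlgebra.omega_mul_mk, QuadraticAlgebra.mk.injEq]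
      at hw <;>
    omega

end Eisenstein

section CubicAlgebra

/-- The algebra `R[w] / (w ^ 3 - p * w - q)`; the triple `⟨x, y, z⟩` stands for
`x + y * w + z * w ^ 2`. -/
@[ext]
structure CubicAlgebra (R : Type*) (p q : R) where
  x : R
  y : R
  z : R
deriving DecidableEq

namespace CubicAlgebra

variable {R : Type*} [CommRing R] {p q : R}

instance : Zero (CubicAlgebra R p q) := ⟨⟨0, 0, 0⟩⟩
instance : One (CubicAlgebra R p q) := ⟨⟨1, 0, 0⟩⟩
instance : Add (CubicAlgebra R p q) := ⟨fun u v ↦ ⟨u.x + v.x, u.y + v.y, u.z + v.z⟩⟩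
instance : Neg (CubicAlgebra R p q) := ⟨fun u ↦ ⟨-u.x, -u.y, -u.z⟩⟩
instance : Mul (CubicAlgebra R p q) := ⟨fun u v ↦
  ⟨u.x * v.x + q * (u.y * v.z + u.z * v.y),
   u.x * v.y + u.y * v.x + p * (u.y * v.z + u.z * v.y) + q * (u.z * v.z),
   u.x * v.z + u.y * v.y + u.z * v.x + p * (u.z * v.z)⟩⟩

theorem zero_def : (0 : CubicAlgebra R p q) = ⟨0, 0, 0⟩ := rfl
theorem one_def : (1 : CubicAlgebra R p q) = ⟨1, 0, 0⟩ := rfl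
theorem add_def (u v : CubicAlgebra R p q) : u + v = ⟨u.x + v.x, u.y + v.y, u.z + v.z⟩ := rfl
theorem neg_def (u : CubicAlgebra R p q) : -u = ⟨-u.x, -u.y, -u.z⟩ := rfl
theorem mul_def (u v : CubicAlgebra R p q) : u * v =
    ⟨u.x * v.x + q * (u.y * v.z + u.z * v.y),
     u.x * v.y + u.y * v.x + p * (u.y * v.z + u.z * v.y) + q * (u.z * v.z),
     u.x * v.z + u.y * v.y + u.z * v.x + p * (u.z * v.z)⟩ := rfl

instance : CommRing (CubicAlgebra R p q) where
  add_assoc u v w := by simp only [add_def, add_assoc]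
  zero_add u := by simp only [zero_def, add_def, zero_add]
  add_zero u := by simp only [zero_def, add_def, add_zero]
  add_comm u v := by simp only [add_def, add_comm]
  neg_add_cancel u := by simp only [neg_def, add_def, neg_add_cancel, zero_def]
  mul_assoc u v w := by ext <;> simp only [mul_def] <;> ring
  one_mul u := by ext <;> simp only [one_def, mul_def] <;> ring
  mul_one u := by ext <;> simp only [one_def, mul_def] <;> ring
  mul_comm u v := by ext <;> simp only [mul_def] <;> ring
  left_distrib u v w := by ext <;> simp only [mul_def, add_def] <;> ring
  right_distrib u v w := by ext <;> simp only [mul_def, add_def] <;> ring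
  zero_mul u := by ext <;> simp only [zero_def, mul_def] <;> ring
  mul_zero u := by ext <;> simp only [zero_def, mul_def] <;> ring
  nsmul := nsmulRec
  zsmul := zsmulRec

/-- The norm of `CubicAlgebra R p q` over `R`. -/
def norm : CubicAlgebra R p q →* R where
  toFun u := u.x ^ 3 + q * u.y ^ 3 + q ^ 2 * u.z ^ 3 + 2 * p * u.x ^ 2 * u.z - p * u.x * u.y ^ 2 +
    p ^ 2 * u.x * u.z ^ 2 - p * q * u.y * u.z ^ 2 - 3 * q * u.x * u.y * u.z
  map_one' := by simp only [one_def]; ring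
  map_mul' u v := by simp only [mul_def]; ring

theorem norm_mk (x y z : R) : norm (⟨x, y, z⟩ : CubicAlgebra R p q) =
    x ^ 3 + q * y ^ 3 + q ^ 2 * z ^ 3 + 2 * p * x ^ 2 * z - p * x * y ^ 2 +
      p ^ 2 * x * z ^ 2 - p * q * y * z ^ 2 - 3 * q * x * y * z := rfl

/-- Evaluation at a root `w` of `w ^ 3 = p * w + q` in a commutative `R`-algebra. -/
def lift {A : Type*} [CommRing A] [Algebra R A] (w : A)
    (hw : w ^ 3 = algebraMap R A p * w + algebraMap R A q) : CubicAlgebra R p q →+* A where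
  toFun u := algebraMap R A u.x + algebraMap R A u.y * w + algebraMap R A u.z * w ^ 2
  map_zero' := by simp only [zero_def, map_zero]; ring
  map_one' := by simp only [one_def, map_zero, map_one]; ring
  map_add' u v := by simp only [add_def, map_add]; ring
  map_mul' u v := by
    simp only [mul_def, map_add, map_mul]
    linear_combination (-(algebraMap R A u.y * algebraMap R A v.z +
      algebraMap R A u.z * algebraMap R A v.y + algebraMap R A u.z * algebraMap R A v.z * w)) * hw

theorem lift_apply {A : Type*} [CommRing A] [Algebra R A] {w : A}
    (hw : w ^ 3 = algebraMap R A p * w + algebraMap R A q) (u : CubicAlgebra R p q) :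
    lift w hw u = algebraMap R A u.x + algebraMap R A u.y * w + algebraMap R A u.z * w ^ 2 := rfl

/-- The second factor is four times the product of the values of `u` at the other two roots. -/
theorem four_mul_algebraMap_norm {A : Type*} [CommRing A] [Algebra R A] {w : A}
    (hw : w ^ 3 = algebraMap R A p * w + algebraMap R A q) (x y z : R) :
    4 * algebraMap R A (norm (⟨x, y, z⟩ : CubicAlgebra R p q)) = lift w hw ⟨x, y, z⟩ *
      ((algebraMap R A (2 * x + 2 * p * z) - algebraMap R A y * w - algebraMap R A z * w ^ 2) ^ 2 +
        (3 * w ^ 2 - algebraMap R A (4 * p)) * (algebraMap R A y - algebraMap R A z * w) ^ 2) := by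
  simp only [norm_mk, lift_apply, map_add, map_sub, map_mul, map_pow, map_ofNat]
  generalize algebraMap R A x = x, algebraMap R A y = y, algebraMap R A z = z,
    algebraMap R A p = p, algebraMap R A q = q at *
  linear_combination -4 * (y ^ 3 - 3 * x * y * z - p * y * z ^ 2 +
    z ^ 3 * (w ^ 3 - p * w + q)) * hw

end CubicAlgebra
end CubicAlgebra

section TwoAdic

variable {R : Type*} [CommRing R]

/-- A first-order `2`-adic expansion at `1` in the direction `s`: `u = 1 + 2 ^ k * t` for some
`k ≥ 2` and some `t ≡ s` modulo `2`. -/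
def HasTwoAdicDirection (s u : R) : Prop :=
  ∃ (k : ℕ) (r : R), u = 1 + 2 ^ (k + 2) * (s + 2 * r)

namespace HasTwoAdicDirection

variable {s u v : R}

theorem sq (h : HasTwoAdicDirection s u) : HasTwoAdicDirection s (u ^ 2) := by
  obtain ⟨k, r, rfl⟩ := h
  exact ⟨k + 1, r + 2 ^ k * (s + 2 * r) ^ 2, by ring⟩

theorem pow_of_odd (h : HasTwoAdicDirection s u) {n : ℕ} (hn : Odd n) :
    HasTwoAdicDirection s (u ^ n) := by
  obtain ⟨k, r, rfl⟩ := h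
  obtain ⟨l, rfl⟩ := hn
  obtain ⟨c, hc⟩ := Polynomial.powAddExpansion 1 (2 ^ (k + 2) * (s + 2 * r)) (2 * l + 1)
  refine ⟨k, r + l * (s + 2 * r) + 2 ^ (k + 1) * c * (s + 2 * r) ^ 2, ?_⟩
  rw [hc]
  push_cast
  simp only [one_pow]
  ring

theorem pow (h : HasTwoAdicDirection s u) {n : ℕ} (hn : n ≠ 0) :
    HasTwoAdicDirection s (u ^ n) := by
  obtain ⟨k, m, hm, rfl⟩ := Nat.exists_eq_two_pow_mul_odd hn
  clear hn
  rw [mul_comm, pow_mul]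
  induction k with
  | zero => simpa using h.pow_of_odd hm
  | succ k ih => simpa only [pow_succ (2 : ℕ), pow_mul] using ih.sq

theorem of_mul_eq_one (h : HasTwoAdicDirection s u) (huv : u * v = 1) :
    HasTwoAdicDirection s v := by
  obtain ⟨k, r, rfl⟩ := h
  refine ⟨k, -s - r + 2 ^ (k + 1) * (s + 2 * r) ^ 2 * v, ?_⟩
  linear_combination (1 - 2 ^ (k + 2) * (s + 2 * r)) * huv

theorem zpow {u : Rˣ} (h : HasTwoAdicDirection s (u : R)) {n : ℤ} (hn : n ≠ 0) :
    HasTwoAdicDirection s ((u ^ n : Rˣ) : R) := by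
  obtain ⟨m, rfl | rfl⟩ := n.eq_nat_or_neg
  · simpa using h.pow (by simpa using hn)
  · rw [zpow_neg, zpow_natCast]
    refine (h.pow (n := m) (by simpa using hn)).of_mul_eq_one ?_
    rw [← Units.val_pow_eq_pow_val, Units.mul_inv]

theorem map_ne_zero (h : HasTwoAdicDirection s u) (L : R →+ ℤ) (hL : L 1 = 0)
    (hs : Odd (L s)) : L u ≠ 0 := by
  obtain ⟨k, r, rfl⟩ := h
  have hsmul : (2 ^ (k + 2) * (s + 2 * r) : R) = (2 ^ (k + 2)) • (s + (2 : ℕ) • r) := by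
    simp only [nsmul_eq_mul, Nat.cast_pow, Nat.cast_ofNat]
  rw [map_add, hL, zero_add, hsmul, map_nsmul, map_add, map_nsmul]
  refine smul_ne_zero (by positivity) fun h0 ↦ ?_
  obtain ⟨c, hc⟩ := hs
  simp only [nsmul_eq_mul, Nat.cast_ofNat] at h0
  omega

theorem exists_eq_one_add_four_mul (h : HasTwoAdicDirection s u) : ∃ t, u = 1 + 4 * t := by
  obtain ⟨k, r, rfl⟩ := h
  exact ⟨2 ^ k * (s + 2 * r), by ring⟩

/-- Skolem's `2`-adic argument: reduction modulo `4` confines `n` to the multiples of `d`, and there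
the expansion at `1` leaves only `n = 0`. -/
theorem eq_zero_of_map_zpow_eq_zero {η : Rˣ} {d : ℕ} (hd : d ≠ 0)
    (h : HasTwoAdicDirection s ((η ^ d : Rˣ) : R)) (L : R →+ ℤ) (hL : L 1 = 0) (hs : Odd (L s))
    (hr : ∀ r < d, r ≠ 0 → ¬ (4 : ℤ) ∣ L ((η ^ r : Rˣ) : R)) {n : ℤ}
    (hn : L ((η ^ n : Rˣ) : R) = 0) : n = 0 := by
  obtain ⟨q, r, hrd, rfl⟩ : ∃ (q : ℤ) (r : ℕ), r < d ∧ n = d * q + r := by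
    have hlt := Int.emod_lt_of_pos n (show (0 : ℤ) < d by omega)
    have hnonneg := Int.emod_nonneg n (show (d : ℤ) ≠ 0 by omega)
    have hdiv := Int.mul_ediv_add_emod n d
    exact ⟨n / d, (n % d).toNat, by omega, by omega⟩
  rw [zpow_add, zpow_mul, zpow_natCast, zpow_natCast] at hn
  obtain ⟨t, ht⟩ : ∃ t, (((η ^ d) ^ q : Rˣ) : R) = 1 + 4 * t := by
    rcases eq_or_ne q 0 with rfl | hq
    · exact ⟨0, by simp⟩
    · exact (h.zpow hq).exists_eq_one_add_four_mul
  obtain rfl : r = 0 := by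
    by_contra hr0
    refine hr r hrd hr0 (dvd_neg.1 ⟨L (t * (η ^ r : Rˣ)), ?_⟩)
    have hsmul : (1 + 4 * t) * ((η ^ r : Rˣ) : R) = (η ^ r : Rˣ) + 4 • (t * (η ^ r : Rˣ)) := by
      simp only [nsmul_eq_mul, Nat.cast_ofNat]
      ring
    rw [Units.val_mul, ht, hsmul, map_add, map_nsmul] at hn
    simp only [nsmul_eq_mul, Nat.cast_ofNat] at hn
    linarith
  by_contra hq
  rw [pow_zero, mul_one] at hn
  exact (h.zpow (by simpa [hd] using hq)).map_ne_zero L hL hs hn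

end HasTwoAdicDirection
end TwoAdic

section FundamentalUnit

open CubicAlgebra

/-- The order `ℤ[w]` with `w ^ 3 = 3 * w + 4`. -/
abbrev CubicOrder := CubicAlgebra ℤ 3 4

namespace CubicOrder

/-- The fundamental unit `9 + 11 * w + 5 * w ^ 2`. -/
def fundamentalUnit : CubicOrderˣ where
  val := ⟨9, 11, 5⟩
  inv := ⟨-7, 1, 1⟩
  val_inv := by decide
  inv_val := by decide

theorem norm_fundamentalUnit : norm (fundamentalUnit : CubicOrder) = 1 := by
  decide

theorem norm_fundamentalUnit_zpow (n : ℤ) :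
    norm ((fundamentalUnit ^ n : CubicOrderˣ) : CubicOrder) = 1 := by
  have h : Units.map norm fundamentalUnit = 1 := Units.ext norm_fundamentalUnit
  rw [← Units.coe_map, map_zpow, h, one_zpow, Units.val_one]

theorem exists_real_root : ∃ w : ℝ, w ^ 3 = 3 * w + 4 ∧ 2.195 ≤ w ∧ w ≤ 2.196 := by
  have hcont : ContinuousOn (fun w : ℝ ↦ w ^ 3 - 3 * w) (Set.Icc 2.195 2.196) := by fun_prop
  obtain ⟨w, hw, hroot⟩ := intermediate_value_Icc (by norm_num) hcont
    (show (4 : ℝ) ∈ _ by constructor <;> norm_num)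
  exact ⟨w, sub_eq_iff_eq_add'.1 hroot, hw.1, hw.2⟩

theorem four_eq_mul_of_norm_eq_one {w : ℝ} (hw : w ^ 3 = 3 * w + 4) {x y z : ℤ}
    (hnorm : norm (⟨x, y, z⟩ : CubicOrder) = 1) :
    4 = (x + y * w + z * w ^ 2) *
      ((2 * x + 6 * z - y * w - z * w ^ 2) ^ 2 + (3 * w ^ 2 - 12) * (y - z * w) ^ 2) := by
  have := four_mul_algebraMap_norm (R := ℤ) (p := 3) (q := 4) (w := w) (by simpa using hw) x y z
  rw [hnorm, lift_apply] at this
  norm_num at this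
  exact this

section Bounds

variable {w : ℝ} {x y z : ℤ}

theorem pos_of_norm_eq_one (hw : w ^ 3 = 3 * w + 4) (hw₁ : 2.195 ≤ w)
    (hnorm : norm (⟨x, y, z⟩ : CubicOrder) = 1) : 0 < x + y * w + z * w ^ 2 := by
  have hprod := four_eq_mul_of_norm_eq_one hw hnorm
  have hdisc : 0 ≤ 3 * w ^ 2 - 12 := by nlinarith
  exact pos_of_mul_pos_left (hprod ▸ four_pos) (by positivity)

theorem conj_bounds (hw : w ^ 3 = 3 * w + 4) (hw₁ : 2.195 ≤ w)
    (hnorm : norm (⟨x, y, z⟩ : CubicOrder) = 1) (hone : 1 ≤ x + y * w + z * w ^ 2) :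
    |2 * x + 6 * z - y * w - z * w ^ 2| ≤ 2 ∧ |y - z * w| ≤ 1.3 := by
  have hprod := four_eq_mul_of_norm_eq_one hw hnorm
  have hP := sq_nonneg (2 * x + 6 * z - y * w - z * w ^ 2)
  have hE := sq_nonneg (y - z * w)
  have hdisc : 2.4 ≤ 3 * w ^ 2 - 12 := by nlinarith
  have hle : (2 * x + 6 * z - y * w - z * w ^ 2) ^ 2 + (3 * w ^ 2 - 12) * (y - z * w) ^ 2 ≤ 4 := by
    rw [hprod]
    exact le_mul_of_one_le_left (by positivity) hone
  constructor
  · refine abs_le_of_sq_le_sq ?_ (by norm_num)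
    nlinarith [mul_nonneg (show 0 ≤ 3 * w ^ 2 - 12 by linarith) hE]
  · refine abs_le_of_sq_le_sq ?_ (by norm_num)
    nlinarith [mul_le_mul_of_nonneg_right hdisc hE, hP]

theorem coeff_bounds (hw : w ^ 3 = 3 * w + 4) (hw₁ : 2.195 ≤ w) (hw₂ : w ≤ 2.196)
    (hnorm : norm (⟨x, y, z⟩ : CubicOrder) = 1) (hone : 1 ≤ x + y * w + z * w ^ 2)
    (hlt : x + y * w + z * w ^ 2 < 9 + 11 * w + 5 * w ^ 2) :
    (0 ≤ z ∧ z ≤ 5) ∧ (2 * z - 1 ≤ y ∧ y ≤ 2 * z + 2) ∧ (-3 ≤ x ∧ x ≤ 14) := by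
  obtain ⟨hP, hE⟩ := conj_bounds hw hw₁ hnorm hone
  rw [abs_le] at hP hE
  have hsq₁ : 4.818 ≤ w ^ 2 := by nlinarith
  have hsq₂ : w ^ 2 ≤ 4.823 := by nlinarith
  have htrace : 2 * (x + y * w + z * w ^ 2) = (2 * x + 6 * z - y * w - z * w ^ 2) +
      3 * w * (y - z * w) + z * (6 * w ^ 2 - 6) := by ring
  have hz₀ : (-1 : ℝ) < z := by nlinarith [htrace, hsq₁]
  have hz₅ : (z : ℝ) < 6 := by nlinarith [htrace, hsq₁]
  have hy₀ : (2 * z - 2 : ℝ) < y := by nlinarith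
  have hy₅ : (y : ℝ) < 2 * z + 3 := by nlinarith
  have hx₀ : (-4 : ℝ) < x := by nlinarith
  have hx₅ : (x : ℝ) < 15 := by nlinarith
  norm_cast at hz₀ hz₅ hy₀ hy₅ hx₀ hx₅
  omega

end Bounds

theorem eq_one_or_eq_fundamentalUnit_of_mem_box : ∀ z ∈ Finset.Icc (0 : ℤ) 5,
    ∀ y ∈ Finset.Icc (2 * z - 1) (2 * z + 2), ∀ x ∈ Finset.Icc (-3 : ℤ) 14,
      norm (⟨x, y, z⟩ : CubicOrder) = 1 →
        (⟨x, y, z⟩ : CubicOrder) = 1 ∨ (⟨x, y, z⟩ : CubicOrder) = fundamentalUnit := by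
  decide +kernel

theorem exists_zpow_of_norm_eq_one {u : CubicOrder} (hu : norm u = 1) :
    ∃ n : ℤ, u = ((fundamentalUnit ^ n : CubicOrderˣ) : CubicOrder) := by
  obtain ⟨w, hw, hw₁, hw₂⟩ := exists_real_root
  let ρ : CubicOrder →+* ℝ := lift w (by simpa using hw)
  have hρ (v : CubicOrder) : ρ v = v.x + v.y * w + v.z * w ^ 2 := by simp [ρ, lift_apply]
  have hη : ρ fundamentalUnit = 9 + 11 * w + 5 * w ^ 2 := by simp [hρ, fundamentalUnit]
  have hη₁ : 1 < ρ fundamentalUnit := by rw [hη]; nlinarith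
  have hpos : 0 < ρ u := (hρ u).symm ▸ pos_of_norm_eq_one hw hw₁ hu
  obtain ⟨n, hn, hn'⟩ := exists_mem_Ico_zpow hpos hη₁
  have hzpow (k : ℤ) : ρ ((fundamentalUnit ^ k : CubicOrderˣ) : CubicOrder) =
      ρ fundamentalUnit ^ k := by
    rw [← MonoidHom.coe_coe ρ, ← Units.coe_map, map_zpow, Units.val_zpow_eq_zpow_val, Units.coe_map]
  obtain ⟨v, rfl⟩ := ((fundamentalUnit ^ n).isUnit.dvd : _ ∣ u)
  have hv : norm v = 1 := by rwa [map_mul, norm_fundamentalUnit_zpow, one_mul] at hu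
  rw [map_mul, hzpow] at hn hn'
  have hηn : 0 < ρ fundamentalUnit ^ n := zpow_pos (by positivity) n
  have hv₁ : 1 ≤ ρ v := le_of_mul_le_mul_left (by rwa [mul_one]) hηn
  have hv₂ : ρ v < ρ fundamentalUnit :=
    lt_of_mul_lt_mul_left (by rwa [← zpow_add_one₀ (by positivity)]) hηn.le
  have hv_eq : v = 1 := by
    obtain ⟨x, y, z⟩ := v
    obtain ⟨hz, hy, hx⟩ := coeff_bounds hw hw₁ hw₂ hv (by rwa [hρ] at hv₁)
      (by rwa [hη, hρ] at hv₂)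
    exact (eq_one_or_eq_fundamentalUnit_of_mem_box z (Finset.mem_Icc.2 hz) y (Finset.mem_Icc.2 hy)
      x (Finset.mem_Icc.2 hx) hv).resolve_right fun h ↦ hv₂.ne (congrArg ρ h)
  exact ⟨n, by rw [hv_eq, mul_one]⟩

/-- The coefficient functional `x + y * w + z * w ^ 2 ↦ z + 2 * y`, whose kernel consists of the
elements `x + m * (w - 2 * w ^ 2)`. -/
def skolemFunctional : CubicOrder →+ ℤ where
  toFun u := u.z + 2 * u.y
  map_zero' := rfl
  map_add' u v := by simp only [add_def]; ring

theorem hasTwoAdicDirection_fundamentalUnit_pow_four : HasTwoAdicDirection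
    (⟨213538, 257401, 117223⟩ : CubicOrder) ((fundamentalUnit ^ 4 : CubicOrderˣ) : CubicOrder) :=
  ⟨1, 0, by decide +kernel⟩

theorem not_four_dvd_skolemFunctional_fundamentalUnit_pow : ∀ r < 4, r ≠ 0 →
    ¬ (4 : ℤ) ∣ skolemFunctional ((fundamentalUnit ^ r : CubicOrderˣ) : CubicOrder) := by
  decide +kernel

theorem eq_one_of_norm_eq_one_of_skolemFunctional_eq_zero {u : CubicOrder} (hu : norm u = 1)
    (hL : skolemFunctional u = 0) : u = 1 := by
  obtain ⟨n, rfl⟩ := exists_zpow_of_norm_eq_one hu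
  have hn : n = 0 := hasTwoAdicDirection_fundamentalUnit_pow_four.eq_zero_of_map_zpow_eq_zero
    four_ne_zero skolemFunctional rfl (by decide)
    not_four_dvd_skolemFunctional_fundamentalUnit_pow hL
  rw [hn, zpow_zero, Units.val_one]

theorem norm_eq_thue_form (j m : ℤ) :
    norm (⟨j + 4 * m, m, -2 * m⟩ : CubicOrder) = j ^ 3 + 9 * j * m ^ 2 - 72 * m ^ 3 := by
  rw [norm_mk]
  ring

end CubicOrder
end FundamentalUnit

section Thue

theorem thue_eq_one {j m : ℤ} (h : j ^ 3 + 9 * j * m ^ 2 - 72 * m ^ 3 = 1) : j = 1 ∧ m = 0 := by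
  have hu := CubicOrder.eq_one_of_norm_eq_one_of_skolemFunctional_eq_zero
    ((CubicOrder.norm_eq_thue_form j m).trans h) (show -2 * m + 2 * m = 0 by ring)
  have hx : j + 4 * m = 1 := congrArg CubicAlgebra.x hu
  have hm : m = 0 := congrArg CubicAlgebra.y hu
  exact ⟨by linarith, hm⟩

theorem thue_eq_seven {a b : ℤ}
    (h : 2 * a ^ 3 + 9 * a ^ 2 * b + 18 * a * b ^ 2 + 9 * b ^ 3 = 7) : a = 2 ∧ b = -1 := by
  have hmod : ∀ a b : ZMod 7, 2 * a ^ 3 + 9 * a ^ 2 * b + 18 * a * b ^ 2 + 9 * b ^ 3 = 7 →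
      a + 2 * b = 0 := by decide
  have hdvd : (7 : ℤ) ∣ a + 2 * b := by
    refine (ZMod.intCast_zmod_eq_zero_iff_dvd _ 7).1 ?_
    push_cast
    exact hmod a b (by exact_mod_cast congrArg (Int.cast : ℤ → ZMod 7) h)
  obtain ⟨m, hm⟩ := hdvd
  obtain rfl : a = 7 * m - 2 * b := by linarith
  obtain ⟨hj, hm₀⟩ := thue_eq_one (j := -b + 2 * m) (m := -m) (by linarith)
  omega

end Thue

section Mordell

theorem odd_of_sq_eq_cube_add {X Y k : ℤ} (h : Y ^ 2 = X ^ 3 + k) (hk : Odd k)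
    (hk₈ : ¬ 8 ∣ k - 1) : Odd X := by
  by_contra hX
  obtain ⟨x, rfl⟩ := Int.not_odd_iff_even.1 hX
  have hY : Odd (Y ^ 2) := by
    rw [h]
    exact (Even.pow_of_ne_zero ⟨x, rfl⟩ three_ne_zero).add_odd hk
  obtain ⟨c, hc⟩ := Int.eight_dvd_sq_sub_one_of_odd (Int.odd_pow' two_ne_zero |>.1 hY)
  exact hk₈ ⟨c - x ^ 3, by linarith⟩

theorem exists_eq_mul_of_sq_eq_cube_add_sq_mul {p X Y k : ℤ} (hp : Prime p)
    (h : Y ^ 2 = X ^ 3 + p ^ 2 * k) (hX : p ∣ X) :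
    ∃ x y, X = p * x ∧ Y = p * y ∧ y ^ 2 = p * x ^ 3 + k := by
  obtain ⟨x, rfl⟩ := hX
  obtain ⟨y, rfl⟩ := hp.dvd_of_dvd_pow (n := 2) ⟨p ^ 2 * x ^ 3 + p * k, by rw [h]; ring⟩
  exact ⟨x, y, rfl, rfl, mul_left_cancel₀ (pow_ne_zero 2 hp.ne_zero) (by linarith)⟩

theorem exists_eq_mul_of_sq_eq_cube_add_cube_mul {p X Y k : ℤ} (hp : Prime p)
    (h : Y ^ 2 = X ^ 3 + p ^ 3 * k) (hX : p ∣ X) :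
    ∃ x y, X = p * x ∧ Y = p ^ 2 * y ∧ p * y ^ 2 = x ^ 3 + k := by
  obtain ⟨x, y, rfl, rfl, hxy⟩ :=
    exists_eq_mul_of_sq_eq_cube_add_sq_mul (k := p * k) hp (by rw [h]; ring) hX
  obtain ⟨t, rfl⟩ := hp.dvd_of_dvd_pow (n := 2) ⟨x ^ 3 + k, by rw [hxy]; ring⟩
  exact ⟨x, t, rfl, by ring, mul_left_cancel₀ hp.ne_zero (by linarith)⟩

theorem isCoprime_of_not_dvd_of_prime {p x : ℤ} (hp : Prime p) (h : ¬ p ∣ x) : IsCoprime x p :=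
  (hp.coprime_iff_not_dvd.2 h).symm

theorem isCoprime_two_mul_of_sq_eq_cube_add {X Y k : ℤ} (h : Y ^ 2 = X ^ 3 + k) (hX : Odd X)
    (hk : IsCoprime X k) : IsCoprime X (2 * Y) := by
  have hk_eq : k = Y * Y + X * (-X ^ 2) := by linarith
  exact (Int.isCoprime_two_right.2 hX).mul_right
    (hk_eq ▸ hk).of_add_mul_left_right.of_mul_right_left

theorem isCoprime_1323_of_not_dvd {X : ℤ} (h₃ : ¬ 3 ∣ X) (h₇ : ¬ 7 ∣ X) : IsCoprime X 1323 := by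
  have h : IsCoprime X (3 ^ 3 * 7 ^ 2) :=
    (isCoprime_of_not_dvd_of_prime Int.prime_three h₃).pow_right.mul_right
      (isCoprime_of_not_dvd_of_prime (by norm_num) h₇).pow_right
  exact h

theorem seven_ne_cube_add_nine_mul (a b : ℤ) : 7 ≠ a ^ 3 + 9 * b := by
  have hmod : ∀ a b : ZMod 9, 7 ≠ a ^ 3 + 9 * b := by decide
  exact fun h ↦ hmod a b (by exact_mod_cast congrArg (Int.cast : ℤ → ZMod 9) h)

theorem mul_sq_add_sq_ne_seven (a b : ℤ) : b * (a ^ 2 + b ^ 2) ≠ 7 := by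
  intro h
  have hb : 0 < b := pos_of_mul_pos_left (b := a ^ 2 + b ^ 2) (by linarith) (by positivity)
  have hb₂ : b < 2 := by nlinarith [mul_nonneg hb.le (sq_nonneg a)]
  obtain rfl : b = 1 := by omega
  have hmod : ∀ a : ZMod 4, 1 * (a ^ 2 + 1 ^ 2) ≠ 7 := by decide
  exact hmod a (by exact_mod_cast congrArg (Int.cast : ℤ → ZMod 4) h)

theorem mul_sq_sub_sq_ne_seven (a b : ℤ) : b * (a ^ 2 - b ^ 2) ≠ 7 := by
  have hmod : ∀ a b : ZMod 9, b * (a ^ 2 - b ^ 2) ≠ 7 := by decide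
  exact fun h ↦ hmod a b (by exact_mod_cast congrArg (Int.cast : ℤ → ZMod 9) h)

theorem not_seven_dvd_of_sq_eq_cube_add_1323 {X Y : ℤ} (h : Y ^ 2 = X ^ 3 + 1323) : ¬ 7 ∣ X := by
  intro h₇
  obtain ⟨x, y, -, -, hxy⟩ :=
    exists_eq_mul_of_sq_eq_cube_add_sq_mul (p := 7) (k := 27) (by norm_num) h h₇
  have hmod : ∀ x y : ZMod 7, y ^ 2 ≠ 7 * x ^ 3 + 27 := by decide
  exact hmod x y (by exact_mod_cast congrArg (Int.cast : ℤ → ZMod 7) hxy)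

theorem eq_of_three_mul_sq_eq_cube_add_49 {x y : ℤ} (h : 3 * y ^ 2 = x ^ 3 + 49)
    (hx : IsCoprime x (2 * 7)) : x = -1 ∧ (y = 4 ∨ y = -4) := by
  obtain ⟨a, b, A, B, hA, hB, ⟨hp, -⟩ | ⟨hp, hq⟩⟩ :=
    exists_of_sq_sub_three_mul_sq_eq_pow_three (p := 7) (q := y) (x := -x) (by linarith) hx.neg_left
  · exact absurd (hp.trans (hA.trans (by ring))) (seven_ne_cube_add_nine_mul a (a * b ^ 2))
  · obtain ⟨rfl, rfl⟩ := thue_eq_seven (a := a) (b := b) (by rw [hp, hA, hB]; ring)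
    have hy : y = 4 ∨ y = -4 := by omega
    have hx₃ : x ^ 3 = (-1) ^ 3 := by rcases hy with rfl | rfl <;> linarith
    exact ⟨(Odd.strictMono_pow (by decide : Odd 3)).injective hx₃, hy⟩

theorem three_dvd_of_sq_eq_cube_add_1323 {X Y : ℤ} (h : Y ^ 2 = X ^ 3 + 1323)
    (hX : Odd X) (h₇ : ¬ 7 ∣ X) : 3 ∣ X := by
  by_contra h₃
  have hcop := isCoprime_two_mul_of_sq_eq_cube_add h hX (isCoprime_1323_of_not_dvd h₃ h₇)
  obtain ⟨a, b, A, B, hA, hB, ⟨-, hq⟩ | ⟨hp, hq⟩⟩ :=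
    exists_of_sq_sub_three_mul_sq_eq_pow_three (p := Y) (q := 21) (by linarith) hcop
  · exact mul_sq_add_sq_ne_seven a b (by linarith)
  · have hA₃ : 3 ∣ A := by
      have ha : 3 ∣ a ^ 3 := by
        rcases hq with hq | hq
        · exact ⟨7 - 3 * a * b ^ 2 - 2 * a ^ 2 * b - 2 * b ^ 3, by linarith⟩
        · exact ⟨-7 - 3 * a * b ^ 2 - 2 * a ^ 2 * b - 2 * b ^ 3, by linarith⟩
      rw [hA]
      exact dvd_add ha ⟨3 * a * b ^ 2, by ring⟩
    have hY : 3 ∣ Y := by omega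
    have hX₃ : 3 ∣ X ^ 3 := by
      rw [← sub_eq_iff_eq_add.2 h]
      exact dvd_sub (hY.pow two_ne_zero) (by norm_num)
    exact h₃ (Int.prime_three.dvd_of_dvd_pow hX₃)

theorem sq_eq_cube_add_1323_iff {X Y : ℤ} :
    Y ^ 2 = X ^ 3 + 1323 ↔ (X = -3 ∧ Y = 36) ∨ (X = -3 ∧ Y = -36) := by
  constructor
  · intro h
    have hX : Odd X := odd_of_sq_eq_cube_add h (by decide) (by norm_num)
    have h₇ := not_seven_dvd_of_sq_eq_cube_add_1323 h
    obtain ⟨x, y, rfl, rfl, hxy⟩ := exists_eq_mul_of_sq_eq_cube_add_cube_mul (p := 3) (k := 49)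
      Int.prime_three h (three_dvd_of_sq_eq_cube_add_1323 h hX h₇)
    have hcop : IsCoprime x (2 * 7) := (Int.isCoprime_two_right.2 (Int.odd_mul.1 hX).2).mul_right
      (isCoprime_of_not_dvd_of_prime (by norm_num) fun hx ↦ h₇ (hx.mul_left 3))
    obtain ⟨rfl, rfl | rfl⟩ := eq_of_three_mul_sq_eq_cube_add_49 hxy hcop
    all_goals norm_num
  · rintro (⟨rfl, rfl⟩ | ⟨rfl, rfl⟩) <;> norm_num

theorem not_three_dvd_of_sq_eq_cube_sub_1323 {X Y : ℤ} (h : Y ^ 2 = X ^ 3 - 1323) : ¬ 3 ∣ X := by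
  intro h₃
  obtain ⟨x, y, -, -, hxy⟩ :=
    exists_eq_mul_of_sq_eq_cube_add_cube_mul (p := 3) (k := -49) Int.prime_three h h₃
  have hmod : ∀ x y : ZMod 9, 3 * y ^ 2 ≠ x ^ 3 + -49 := by decide
  exact hmod x y (by exact_mod_cast congrArg (Int.cast : ℤ → ZMod 9) hxy)

theorem seven_dvd_of_sq_eq_cube_sub_1323 {X Y : ℤ} (h : Y ^ 2 = X ^ 3 - 1323) (hX : Odd X)
    (h₃ : ¬ 3 ∣ X) : 7 ∣ X := by
  by_contra h₇
  have hcop := isCoprime_two_mul_of_sq_eq_cube_add (k := -1323) h hX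
    (isCoprime_1323_of_not_dvd h₃ h₇).neg_right
  obtain ⟨a, b, -, hb⟩ :=
    exists_of_sq_add_three_mul_sq_eq_pow_three (u := Y) (v := 21) (by linarith) hcop
  exact mul_sq_sub_sq_ne_seven a b (by linarith)

theorem three_dvd_of_sq_eq_seven_mul_cube_sub_27 {x y : ℤ} (h : y ^ 2 = 7 * x ^ 3 - 27)
    (hx : Odd x) : 3 ∣ x := by
  wlog hy : 7 ∣ 6 - y generalizing y
  · refine this (y := -y) (by rwa [neg_sq]) ?_
    have hprod : 7 ∣ (6 - y) * (6 + y) := ⟨9 - x ^ 3, by linarith⟩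
    have h₇ : Prime (7 : ℤ) := by norm_num
    simpa using (h₇.dvd_or_dvd hprod).resolve_left hy
  by_contra h₃
  obtain ⟨v, hv⟩ := hy
  obtain rfl : y = 6 - 7 * v := by linarith
  -- This is the norm of the quotient of `y + 3 * √-3` by `2 + √-3`.
  have hnorm : (3 - 2 * v) ^ 2 + 3 * v ^ 2 = x ^ 3 := by linarith
  have hcop : IsCoprime x (3 - 2 * v) := by
    have hx₂₇ : IsCoprime x (3 ^ 3) :=
      (isCoprime_of_not_dvd_of_prime Int.prime_three h₃).pow_right
    have h₂₇ : (3 ^ 3 : ℤ) = (3 - 2 * v) * (14 * v - 3) + x * (4 * x ^ 2) := by linarith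
    exact (h₂₇ ▸ hx₂₇).of_add_mul_left_right.of_mul_right_left
  obtain ⟨a, b, -, hb⟩ := exists_of_sq_add_three_mul_sq_eq_pow_three hnorm
    ((Int.isCoprime_two_right.2 hx).mul_right hcop)
  have hv₃ : 3 ∣ v := ⟨a ^ 2 * b - b ^ 3, by linarith⟩
  have hx₃ : 3 ∣ x ^ 3 := by
    rw [← hnorm]
    exact dvd_add ((dvd_sub (dvd_refl 3) (hv₃.mul_left 2)).pow two_ne_zero) (dvd_mul_right 3 _)
  exact h₃ (Int.prime_three.dvd_of_dvd_pow hx₃)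

theorem sq_ne_cube_sub_1323 {X Y : ℤ} : Y ^ 2 ≠ X ^ 3 - 1323 := by
  intro h
  have hX : Odd X := odd_of_sq_eq_cube_add (k := -1323) h (by decide) (by norm_num)
  have h₃ := not_three_dvd_of_sq_eq_cube_sub_1323 h
  obtain ⟨x, y, rfl, rfl, hxy⟩ := exists_eq_mul_of_sq_eq_cube_add_sq_mul (p := 7) (k := -27)
    (by norm_num) h (seven_dvd_of_sq_eq_cube_sub_1323 h hX h₃)
  exact h₃ ((three_dvd_of_sq_eq_seven_mul_cube_sub_27 hxy (Int.odd_mul.1 hX).2).mul_left 7)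

end Mordell

theorem stmt_10 :
    (∀ X Y : ℤ, Y ^ 2 = X ^ 3 + 1323 ↔ (X = -3 ∧ Y = 36) ∨ (X = -3 ∧ Y = -36)) ∧
    (¬ ∃ X Y : ℤ, Y ^ 2 = X ^ 3 - 1323) :=
  ⟨fun _ _ ↦ sq_eq_cube_add_1323_iff, fun ⟨_, _, h⟩ ↦ sq_ne_cube_sub_1323 h⟩
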